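/- arXiv:2403.02986 — 2 statements merged into one kernel-verified Lean document; each statement's English description precedes it below -/
import Mathlib

section
/- Let α ∈ S_n be a quasi-diagram with an isolated point i, and let δ_i(α) ∈ S_{n−1} be its i-contraction. Then the orbits of ζ_{n−1}·δ_i(α) on {1,…,n−1} are exactly the sets (ϑ_{i,n})^{−1}(O) for the orbits O of ζ_n·α with i ∉ O, together with (ϑ_{i,n})^{−1}(O₀) ∖ {n}, where O₀ is the orbit of ζ_n·α containing i. In particular, δ_i(α) has the same number of faces as α. -/
/-- The cycle `ϑ_{i,n} = (i, i+1, …, n)` of `S_n`; here `S_n` is realized as the permutations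
of `Fin (m+1)` (with `n = m+1`), 0-indexed, and `a : Fin (m+1)` corresponds to `i`. -/
def vartheta {m : ℕ} (a : Fin (m + 1)) : Equiv.Perm (Fin (m + 1)) :=
  Fin.revPerm * (Fin.cycleRange a.rev)⁻¹ * Fin.revPerm

/-- A permutation of `Fin m` regarded as a permutation of `Fin (m+1)` fixing the last point. -/
def castPerm {m : ℕ} (β : Equiv.Perm (Fin m)) : Equiv.Perm (Fin (m + 1)) :=
  β.viaFintypeEmbedding Fin.castSuccEmb

/-- `ω` is an orbit of the permutation `σ`. -/
def IsOrbit {m : ℕ} (σ : Equiv.Perm (Fin m)) (ω : Set (Fin m)) : Prop :=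
  ∃ x : Fin m, ω = {y | σ.SameCycle x y}

/-!
Conjugating by `ϑ` identifies `{1, …, n - 1}` with the complement of `i` in `{1, …, n}` through
the increasing injection `i.succAbove`. Under this identification `ζ_{n-1} δ_i(α)` becomes
`swap i (τ i) * τ`, where `τ = ζ_n α`: the permutation `τ` with `i` cut out of its cycle.
Cutting out a point does not affect which of the other points share a cycle, so the orbits
upstairs and downstairs correspond by taking preimages. No orbit is lost because `τ i = ζ_n i ≠ i`.
-/

open Equiv Equiv.Perm Set
open Function (Injective Semiconj)

section SameCycle

variable {ι X : Type*} {σ : Perm ι} {τ : Perm X} {f : ι → X} {a : X}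

theorem sameCycle_setoid_le {r : Setoid X} (h : ∀ z, r z (τ z)) : SameCycle.setoid τ ≤ r := by
  rintro x _ ⟨k, rfl⟩
  induction k with
  | zero => exact r.refl x
  | succ k ih => simpa only [add_comm _ (1 : ℤ), zpow_one_add, mul_apply] using r.trans ih (h _)
  | pred k ih =>
    have hback := h ((τ ^ (-(k : ℤ) - 1)) x)
    rw [← mul_apply, ← zpow_one_add, add_sub_cancel] at hback
    exact r.trans ih (r.symm hback)

theorem sameCycle_swap_mul_iff [DecidableEq X] {x y : X} (hx : x ≠ a) (hy : y ≠ a) :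
    (swap a (τ a) * τ).SameCycle x y ↔ τ.SameCycle x y := by
  constructor
  · refine fun h ↦ sameCycle_setoid_le (r := SameCycle.setoid τ) (fun z ↦ ?_) h
    change τ.SameCycle z (swap a (τ a) (τ z))
    rw [swap_apply_def]
    split_ifs with hza hz
    · rw [sameCycle_apply_right, ← hza, sameCycle_apply_right]
    · rw [τ.injective hz]
    · rw [sameCycle_apply_right]
  · -- Moving `a` forward to `τ a` turns each step of `τ` into at most one step of the cut cycle.
    let push : X → X := fun z ↦ if z = a then τ a else z
    have hpush : SameCycle.setoid τ ≤ (SameCycle.setoid (swap a (τ a) * τ)).comap push := by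
      refine sameCycle_setoid_le fun z ↦ ?_
      change (swap a (τ a) * τ).SameCycle (push z) (push (τ z))
      by_cases hz : z = a
      · simp only [push, hz, if_true, ite_self, SameCycle.rfl]
      · have hstep : push (τ z) = (swap a (τ a) * τ) z := by
          simp only [push, mul_apply, swap_apply_def, τ.injective.eq_iff, hz, if_false]
        rw [hstep, sameCycle_apply_right]
        simp only [push, hz, if_false, SameCycle.rfl]
    intro h
    have hxy : (swap a (τ a) * τ).SameCycle (push x) (push y) := hpush h
    simpa only [push, if_neg hx, if_neg hy] using hxy

theorem sameCycle_iff_of_semiconj (hf : Injective f) (h : Semiconj f σ τ) {x y : ι} :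
    σ.SameCycle x y ↔ τ.SameCycle (f x) (f y) := by
  have hzpow (k : ℤ) : f ((σ ^ k) x) = (τ ^ k) (f x) := by
    induction k with
    | zero => rfl
    | succ k ih => rw [add_comm, zpow_one_add, zpow_one_add, mul_apply, mul_apply, h.eq, ih]
    | pred k ih =>
      apply τ.injective
      rw [← h.eq, ← mul_apply, ← mul_apply, ← zpow_one_add, ← zpow_one_add, add_sub_cancel, ih]
  simp only [SameCycle, ← hzpow, hf.eq_iff]

theorem comap_sameCycle_setoid_of_semiconj_swap_mul [DecidableEq X] (hf : Injective f)
    (ha : ∀ x, f x ≠ a) (h : Semiconj f σ ⇑(swap a (τ a) * τ)) :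
    (SameCycle.setoid τ).comap f = SameCycle.setoid σ :=
  Setoid.ext fun x y ↦
    ((sameCycle_iff_of_semiconj hf h).trans (sameCycle_swap_mul_iff (ha x) (ha y))).symm

theorem exists_sameCycle_of_range_eq_compl_singleton (hrange : range f = {a}ᶜ) (hτ : τ a ≠ a)
    (z : X) : ∃ x, τ.SameCycle z (f x) := by
  have hf {y : X} (hy : y ≠ a) : ∃ x, f x = y := by rwa [← mem_range, hrange]
  rcases eq_or_ne z a with rfl | hz
  · obtain ⟨x, hx⟩ := hf hτ
    exact ⟨x, 1, hx.symm⟩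
  · obtain ⟨x, rfl⟩ := hf hz
    exact ⟨x, SameCycle.rfl⟩

end SameCycle

section Classes

variable {ι X : Type*} {s : Setoid X} {f : ι → X} {a : X}

theorem bijOn_preimage_classes (hf : ∀ z, ∃ x, s z (f x)) :
    BijOn (f ⁻¹' ·) s.classes (s.comap f).classes := by
  refine ⟨?_, ?_, ?_⟩
  · rintro _ ⟨z, rfl⟩
    obtain ⟨x, hzx⟩ := hf z
    exact ⟨x, ext fun y ↦ ⟨fun hy ↦ s.trans hy hzx, fun hy ↦ s.trans hy (s.symm hzx)⟩⟩
  · rintro _ ⟨z, rfl⟩ D hD (hzD : f ⁻¹' {y | s y z} = f ⁻¹' D)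
    obtain ⟨x, hzx⟩ := hf z
    have hxz : x ∈ f ⁻¹' {y | s y z} := s.symm hzx
    have hxD : x ∈ f ⁻¹' D := hzD ▸ hxz
    exact s.eq_of_mem_classes ⟨z, rfl⟩ hxz hD hxD
  · rintro _ ⟨x, rfl⟩
    exact ⟨{y | s y (f x)}, ⟨f x, rfl⟩, rfl⟩

theorem image_eq_sdiff_singleton_iff (hf : Injective f) (hrange : range f = {a}ᶜ) {ω : Set ι}
    {C : Set X} : f '' ω = C \ {a} ↔ f ⁻¹' C = ω := by
  rw [sdiff_eq, ← hrange, ← image_preimage_eq_inter_range, hf.image_injective.eq_iff, eq_comm]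

theorem exists_classes_preimage_eq_iff (hf : Injective f) (hrange : range f = {a}ᶜ) {ω : Set ι} :
    (∃ C ∈ s.classes, f ⁻¹' C = ω) ↔
      (∃ C ∈ s.classes, a ∉ C ∧ f '' ω = C) ∨ f '' ω = {y | s y a} \ {a} := by
  simp only [← image_eq_sdiff_singleton_iff hf hrange]
  constructor
  · rintro ⟨C, hC, hω⟩
    by_cases haC : a ∈ C
    · exact .inr (s.eq_of_mem_classes hC haC ⟨a, rfl⟩ (s.refl a) ▸ hω)
    · exact .inl ⟨C, hC, haC, by rwa [sdiff_singleton_eq_self haC] at hω⟩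
  · rintro (⟨C, hC, haC, hω⟩ | hω)
    · exact ⟨C, hC, by rwa [sdiff_singleton_eq_self haC]⟩
    · exact ⟨_, ⟨a, rfl⟩, hω⟩

end Classes

theorem isOrbit_iff_mem_classes {m : ℕ} {σ : Perm (Fin m)} {ω : Set (Fin m)} :
    IsOrbit σ ω ↔ ω ∈ (SameCycle.setoid σ).classes :=
  exists_congr fun _ ↦ Eq.congr_right (ext fun _ ↦ sameCycle_comm)

section Contraction

variable {n : ℕ} {a : Fin (n + 1)} {α : Perm (Fin (n + 1))} {β : Perm (Fin n)}

theorem vartheta_last : vartheta a (Fin.last n) = a := by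
  simp [vartheta, Perm.inv_def]

theorem vartheta_castSucc (j : Fin n) : vartheta a j.castSucc = a.succAbove j := by
  simp only [vartheta, coe_mul, Function.comp_apply, Fin.revPerm_apply, Perm.inv_def,
    Fin.rev_castSucc, Fin.cycleRange_symm_succ, Fin.rev_succAbove, Fin.rev_rev]

theorem image_castSucc_eq_image_vartheta_inv_iff {ω : Set (Fin n)} {T : Set (Fin (n + 1))} :
    Fin.castSucc '' ω = ⇑(vartheta a)⁻¹ '' T ↔ a.succAbove '' ω = T := by
  have hϑ : a.succAbove '' ω = vartheta a '' (Fin.castSucc '' ω) := by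
    simp only [image_image, vartheta_castSucc]
  rw [hϑ, ← (vartheta a).injective.image_injective.eq_iff, image_image _ _ T]
  simp only [Perm.inv_def, apply_symm_apply, image_id']

theorem image_vartheta_inv_sdiff_last (T : Set (Fin (n + 1))) :
    ⇑(vartheta a)⁻¹ '' T \ {Fin.last n} = ⇑(vartheta a)⁻¹ '' (T \ {a}) := by
  have hlast : (vartheta a)⁻¹ a = Fin.last n := by rw [inv_eq_iff_eq, vartheta_last]
  rw [image_sdiff (Equiv.injective _), image_singleton, hlast]

theorem castPerm_castSucc (x : Fin n) : castPerm β x.castSucc = (β x).castSucc :=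
  viaFintypeEmbedding_apply_image β Fin.castSuccEmb x

theorem castPerm_last : castPerm β (Fin.last n) = Fin.last n :=
  viaFintypeEmbedding_apply_notMem_range β Fin.castSuccEmb (by simp)

theorem apply_eq_self_of_castPerm_eq (h : castPerm β = (vartheta a)⁻¹ * α * vartheta a) :
    α a = a := by
  have hlast := castPerm_last (β := β)
  rwa [h, mul_apply, mul_apply, vartheta_last, inv_eq_iff_eq, vartheta_last] at hlast

theorem semiconj_succAbove_of_castPerm_eq
    (h : castPerm β = (vartheta a)⁻¹ * α * vartheta a) : Semiconj a.succAbove β α := by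
  intro x
  have hx := castPerm_castSucc (β := β) x
  rw [h, mul_apply, mul_apply, vartheta_castSucc, inv_eq_iff_eq, vartheta_castSucc] at hx
  exact hx.symm

theorem semiconj_succAbove_finRotate (a : Fin (n + 1)) :
    Semiconj a.succAbove (finRotate n)
      ⇑(swap a (finRotate (n + 1) a) * finRotate (n + 1)) := by
  intro x
  obtain ⟨k, rfl⟩ := Nat.exists_eq_succ_of_ne_zero x.pos.ne'
  have hskip : a.succAbove (finRotate (k + 1) x) =
      if finRotate (k + 2) (a.succAbove x) = a then finRotate (k + 2) a
      else finRotate (k + 2) (a.succAbove x) := by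
    grind [coe_finRotate, Fin.succAbove, Fin.ext_iff]
  simpa only [mul_apply, swap_apply_def, (finRotate _).injective.eq_iff, Fin.succAbove_ne, if_false]
    using hskip

theorem semiconj_succAbove_finRotate_mul (ha : α a = a) (h : Semiconj a.succAbove β α) :
    Semiconj a.succAbove ⇑(finRotate n * β)
      ⇑(swap a ((finRotate (n + 1) * α) a) * (finRotate (n + 1) * α)) := by
  rw [mul_apply, ha, ← mul_assoc]
  exact (semiconj_succAbove_finRotate a).comp_right h

theorem bijOn_preimage_succAbove_finRotate_mul_classes (hn : 0 < n)
    (hβ : castPerm β = (vartheta a)⁻¹ * α * vartheta a) :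
    BijOn (a.succAbove ⁻¹' ·) (SameCycle.setoid (finRotate (n + 1) * α)).classes
      (SameCycle.setoid (finRotate n * β)).classes := by
  have ha := apply_eq_self_of_castPerm_eq hβ
  have hcut := semiconj_succAbove_finRotate_mul ha (semiconj_succAbove_of_castPerm_eq hβ)
  rw [← comap_sameCycle_setoid_of_semiconj_swap_mul Fin.succAbove_right_injective
    (Fin.succAbove_ne a) hcut]
  refine bijOn_preimage_classes fun z ↦
    exists_sameCycle_of_range_eq_compl_singleton (Fin.range_succAbove a) ?_ z
  rw [mul_apply, ha, ← mem_support, support_finRotate_of_le (by lia)]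
  exact Finset.mem_univ a

end Contraction

theorem stmt_12_general (n : ℕ) (hn : 0 < n) (α : Equiv.Perm (Fin (n + 1)))
    (a : Fin (n + 1)) (β : Equiv.Perm (Fin n))
    (hβ : castPerm β = (vartheta a)⁻¹ * α * vartheta a) :
    (∀ ω : Set (Fin n),
      IsOrbit (finRotate n * β) ω ↔
        ((∃ O : Set (Fin (n + 1)), IsOrbit (finRotate (n + 1) * α) O ∧ a ∉ O ∧
            Fin.castSucc '' ω = ⇑(vartheta a)⁻¹ '' O) ∨
          Fin.castSucc '' ω =
            (⇑(vartheta a)⁻¹ '' {y | (finRotate (n + 1) * α).SameCycle a y}) \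
              {Fin.last n})) ∧
    {ω : Set (Fin n) | IsOrbit (finRotate n * β) ω}.ncard =
      {O : Set (Fin (n + 1)) | IsOrbit (finRotate (n + 1) * α) O}.ncard := by
  have hbij := bijOn_preimage_succAbove_finRotate_mul_classes hn hβ
  simp only [isOrbit_iff_mem_classes]
  refine ⟨fun ω ↦ ?_, hbij.ncard_eq.symm⟩
  rw [← hbij.image_eq, image_vartheta_inv_sdiff_last]
  simp only [image_castSucc_eq_image_vartheta_inv_iff, sameCycle_comm (x := a)]
  exact exists_classes_preimage_eq_iff Fin.succAbove_right_injective (Fin.range_succAbove a)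

/-- Let `α ∈ S_{n}` (here `S_{n+1}`, permutations of `Fin (n+1)`, `n ≥ 1`,
so the NL size is `≥ 2`) be a quasi-diagram with an isolated point `a`, and let `β = δ_a(α)`
be its contraction, i.e. the permutation of `Fin n` whose extension fixing the last point is
`ϑ⁻¹ α ϑ` (`ϑ = vartheta a`).  Then the orbits of `ζ_{n} β` are exactly the sets `ϑ⁻¹(O)` for
orbits `O` of `ζ_{n+1} α` with `a ∉ O`, together with `ϑ⁻¹(O₀) \ {last}` where `O₀` is the
orbit containing `a`.  In particular `β` has the same number of faces as `α`. -/
theorem stmt_12 (n : ℕ) (hn : 0 < n) (α : Equiv.Perm (Fin (n + 1)))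
    (hα : ∀ x, α (α x) = x) (a : Fin (n + 1)) (ha : α a = a)
    (β : Equiv.Perm (Fin n))
    (hβ : castPerm β = (vartheta a)⁻¹ * α * vartheta a) :
    (∀ ω : Set (Fin n),
      IsOrbit (finRotate n * β) ω ↔
        ((∃ O : Set (Fin (n + 1)), IsOrbit (finRotate (n + 1) * α) O ∧ a ∉ O ∧
            Fin.castSucc '' ω = ⇑(vartheta a)⁻¹ '' O) ∨
          Fin.castSucc '' ω =
            (⇑(vartheta a)⁻¹ '' {y | (finRotate (n + 1) * α).SameCycle a y}) \
              {Fin.last n})) ∧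
    {ω : Set (Fin n) | IsOrbit (finRotate n * β) ω}.ncard =
      {O : Set (Fin (n + 1)) | IsOrbit (finRotate (n + 1) * α) O}.ncard :=
  stmt_12_general n hn α a β hβ
end

section
/- Let α ∈ S_n be a maximal quasi-diagram with an isolated point i. Then the i-contraction δ_i(α) ∈ S_{n−1} is a maximal quasi-diagram, i.e. ζ_{n−1}·δ_i(α) has exactly one orbit on {1,…,n−1}. -/
/-!
Deleting a point from its cycle leaves the cycles of the remaining points intact. The contraction
`β` of `α` at `a` is `α` with the fixed point `a` deleted, and deleting `a` from the long cycle
`ζ_{n+1}` gives `ζ_n`. Because `α` fixes `a`, deleting `a` from `ζ_{n+1} α` therefore gives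
`ζ_n β`. Deletion is `Equiv.removeNone` after relabelling `a` as `none`.
-/

open Equiv

section Option

variable {X : Type*}

theorem removeNone_mul_optionCongr (f : Perm (Option X)) (g : Perm X) :
    removeNone (f * g.optionCongr) = removeNone f * g := by
  classical
  apply optionCongr_injective
  calc (removeNone (f * g.optionCongr)).optionCongr
      = swap none (f none) * f * g.optionCongr := by simp [mul_assoc]
    _ = (removeNone f).optionCongr * g.optionCongr := by rw [map_equiv_removeNone]
    _ = (removeNone f * g).optionCongr := (optionCongr_trans g (removeNone f)).symm

theorem sameCycle_some_removeNone (f : Perm (Option X)) (x : X) :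
    f.SameCycle (some x) (some (removeNone f x)) := by
  cases hx : f (some x) with
  | none => rw [removeNone_none f hx, ← hx, Perm.sameCycle_apply_right, Perm.sameCycle_apply_right]
  | some z => rw [removeNone_some f ⟨z, hx⟩, Perm.sameCycle_apply_right]

theorem sameCycle_removeNone_of_pow_apply_eq {f : Perm (Option X)} {x y : X} (k : ℕ)
    (h : (f ^ k) (some x) = some y) : Perm.SameCycle (removeNone f) x y := by
  induction k using Nat.strong_induction_on generalizing x with
  | _ k ih =>
    obtain _ | k := k
    · rw [Option.some_injective X h]
    rw [pow_succ, Perm.mul_apply] at h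
    rw [← Perm.sameCycle_apply_left]
    cases hx : f (some x) with
    | some z =>
      rw [← removeNone_some f ⟨z, hx⟩] at h
      exact ih k (by omega) h
    | none =>
      obtain _ | k := k
      · simp [hx] at h
      rw [hx, pow_succ, Perm.mul_apply, ← removeNone_none f hx] at h
      exact ih k (by omega) h

theorem sameCycle_removeNone_iff {f : Perm (Option X)} {x y : X} :
    Perm.SameCycle (removeNone f) x y ↔ f.SameCycle (some x) (some y) := by
  constructor
  · rintro ⟨k, rfl⟩
    induction k with
    | zero => rfl
    | succ k ih =>
      rw [add_comm, zpow_one_add]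
      exact ih.trans (sameCycle_some_removeNone f _)
    | pred k ih =>
      have h := sameCycle_some_removeNone f ((removeNone f ^ (-k - 1 : ℤ)) x)
      rw [← Perm.mul_apply, ← zpow_one_add, add_sub_cancel] at h
      exact ih.trans h.symm
  · rintro ⟨k | k, h⟩
    · exact sameCycle_removeNone_of_pow_apply_eq k h
    · refine (sameCycle_removeNone_of_pow_apply_eq (k + 1) ?_).symm
      rw [← h, zpow_negSucc, Perm.inv_def, apply_symm_apply]

end Option

theorem sameCycle_permCongr {X Y : Type*} (e : X ≃ Y) {f : Perm X} {x y : Y} :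
    (e.permCongr f).SameCycle x y ↔ f.SameCycle (e.symm x) (e.symm y) := by
  refine exists_congr fun k ↦ ?_
  rw [← permCongrHom_coe, ← map_zpow, permCongrHom_coe, permCongr_apply, eq_symm_apply]

theorem castPerm_eq_permCongr_optionCongr {n : ℕ} (β : Perm (Fin n)) :
    castPerm β = finSuccEquivLast.symm.permCongr β.optionCongr := by
  ext1 x
  cases x using Fin.lastCases with
  | last => simpa [castPerm] using
      Perm.viaFintypeEmbedding_apply_notMem_range β Fin.castSuccEmb (b := Fin.last n) (by simp)
  | cast x => simpa [castPerm] using Perm.viaFintypeEmbedding_apply_image β Fin.castSuccEmb x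

theorem vartheta_eq_trans_finSuccEquiv'_symm {n : ℕ} (a : Fin (n + 1)) :
    vartheta a = finSuccEquivLast.trans (finSuccEquiv' a).symm := by
  ext1 x
  cases x using Fin.lastCases with
  | last => simp [vartheta, Perm.inv_def]
  | cast x => simp [vartheta, Perm.inv_def, Fin.rev_castSucc, Fin.rev_succAbove]

theorem permCongr_finSuccEquiv'_of_castPerm_eq {n : ℕ} {α : Perm (Fin (n + 1))}
    {a : Fin (n + 1)} {β : Perm (Fin n)} (hβ : castPerm β = (vartheta a)⁻¹ * α * vartheta a) :
    (finSuccEquiv' a).permCongr α = β.optionCongr := by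
  rw [← (finSuccEquivLast.symm.permCongr).apply_eq_iff_eq, ← castPerm_eq_permCongr_optionCongr, hβ,
    vartheta_eq_trans_finSuccEquiv'_symm]
  rfl

section Fin

variable {n : ℕ} {a : Fin (n + 1)} {x : Fin n}

theorem val_finRotate (x : Fin n) :
    (finRotate n x : ℕ) = if (x : ℕ) + 1 = n then 0 else (x : ℕ) + 1 := by
  cases n with
  | zero => exact x.elim0
  | succ n => simp only [coe_finRotate, Fin.ext_iff, Fin.val_last, Nat.add_right_cancel_iff]

theorem val_succAbove (a : Fin (n + 1)) (x : Fin n) :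
    (a.succAbove x : ℕ) = if (x : ℕ) < a then (x : ℕ) else (x : ℕ) + 1 := by
  rw [Fin.succAbove, apply_ite Fin.val]
  rfl

theorem finRotate_succAbove_of_ne (h : finRotate (n + 1) (a.succAbove x) ≠ a) :
    finRotate (n + 1) (a.succAbove x) = a.succAbove (finRotate n x) := by
  simp only [ne_eq, Fin.ext_iff, val_finRotate, val_succAbove] at h ⊢
  split_ifs at h ⊢ <;> omega

theorem finRotate_eq_succAbove_of_eq (h : finRotate (n + 1) (a.succAbove x) = a) :
    finRotate (n + 1) a = a.succAbove (finRotate n x) := by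
  simp only [Fin.ext_iff, val_finRotate, val_succAbove] at h ⊢
  split_ifs at h ⊢ <;> omega

theorem removeNone_permCongr_finRotate (a : Fin (n + 1)) :
    removeNone ((finSuccEquiv' a).permCongr (finRotate (n + 1))) = finRotate n := by
  ext1 x
  apply Option.some_injective
  by_cases h : finRotate (n + 1) (a.succAbove x) = a
  · rw [removeNone_none _ (by simp [h])]
    simp [finRotate_eq_succAbove_of_eq h]
  · rw [removeNone_some _ ⟨finRotate n x, by simp [finRotate_succAbove_of_ne h]⟩]
    simp [finRotate_succAbove_of_ne h]

end Fin

theorem stmt_14_general {n : ℕ} {α : Perm (Fin (n + 1))} {a : Fin (n + 1)} {β : Perm (Fin n)}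
    (hβ : castPerm β = (vartheta a)⁻¹ * α * vartheta a) (x y : Fin n) :
    (finRotate n * β).SameCycle x y ↔
      (finRotate (n + 1) * α).SameCycle (a.succAbove x) (a.succAbove y) := by
  have hdelete : removeNone ((finSuccEquiv' a).permCongr (finRotate (n + 1) * α)) =
      finRotate n * β := by
    rw [permCongr_mul, permCongr_finSuccEquiv'_of_castPerm_eq hβ, removeNone_mul_optionCongr,
      removeNone_permCongr_finRotate]
  rw [← hdelete, sameCycle_removeNone_iff, sameCycle_permCongr, finSuccEquiv'_symm_some,
    finSuccEquiv'_symm_some]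

/-- Let `α ∈ S_n` (here permutations of `Fin (n+1)`, `n ≥ 1`, so the NL
size is `≥ 2`) be a maximal quasi-diagram with an isolated point `a`, and let `β = δ_a(α)`
be its contraction, i.e. the permutation of `Fin n` whose extension fixing the last point is
`ϑ⁻¹ α ϑ` (`ϑ = vartheta a`).  Then `β` is maximal: `ζ_n β` has exactly one orbit. -/
theorem stmt_14 (n : ℕ) (hn : 0 < n) (α : Equiv.Perm (Fin (n + 1)))
    (hα : ∀ x, α (α x) = x) (a : Fin (n + 1)) (ha : α a = a)
    (hmax : ∀ x y : Fin (n + 1), (finRotate (n + 1) * α).SameCycle x y)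
    (β : Equiv.Perm (Fin n))
    (hβ : castPerm β = (vartheta a)⁻¹ * α * vartheta a) :
    ∀ x y : Fin n, (finRotate n * β).SameCycle x y :=
  fun x y ↦ (stmt_14_general hβ x y).2 (hmax _ _)
end
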